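/- There exists a constant C > 0 such that for every integer n ≥ 2, the fourth central moment of the number of descents of a uniformly random derangement of S_n is at most C·n²; equivalently, (1/d_n) · Σ_{π derangement of {1,…,n}} (des(π) − μ_n)⁴ ≤ C · n², where μ_n is the expected number of descents of a uniformly random derangement of S_n and d_n is the number of derangements of {1,…,n}. -/

import Mathlib

open Finset

/-- The number of descents of a permutation of `Fin n`:
positions `i` with `i+1 < n` and `π(i) > π(i+1)`. -/
def descents {n : ℕ} (π : Equiv.Perm (Fin n)) : ℕ :=
  (Finset.univ.filter fun i : Fin n =>
    ∃ h : (i : ℕ) + 1 < n, π ⟨(i : ℕ) + 1, h⟩ < π i).card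

/-- The derangements of the symmetric group `S_n`. -/
def derangementSet (n : ℕ) : Finset (Equiv.Perm (Fin n)) :=
  Finset.univ.filter fun π => ∀ i, π i ≠ i

/-- Mean number of descents of a uniformly random derangement of `S_n`. -/
noncomputable def derMean (n : ℕ) : ℝ :=
  (∑ π ∈ derangementSet n, (descents π : ℝ)) / (derangementSet n).card

lemma sum_odd_zero {Ω : Type*} [Fintype Ω] (σ : Equiv.Perm Ω) (f : Ω → ℝ)
    (h : ∀ ω, f (σ ω) = - f ω) : ∑ ω, f ω = 0 := by
  have h1 := Equiv.sum_comp σ f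
  simp only [h, Finset.sum_neg_distrib] at h1
  linarith

lemma signs_moment {Ω ι : Type*} [Fintype Ω] [DecidableEq ι] (Y : ι → Ω → ℝ)
    (σ : ι → Equiv.Perm Ω) (T : Finset ι)
    (hsq : ∀ i ∈ T, ∀ ω, Y i ω ^ 2 = 1)
    (hneg : ∀ i ∈ T, ∀ ω, Y i (σ i ω) = - Y i ω)
    (hfix : ∀ i ∈ T, ∀ j ∈ T, j ≠ i → ∀ ω, Y j (σ i ω) = Y j ω) :
    ∑ ω, (∑ i ∈ T, Y i ω) ^ 2 = (T.card : ℝ) * Fintype.card Ω ∧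
    ∑ ω, (∑ i ∈ T, Y i ω) ^ 4 ≤ 3 * (T.card : ℝ) ^ 2 * Fintype.card Ω := by
  induction T using Finset.induction_on with
  | empty => simp
  | insert a s ha ih =>
    obtain ⟨ih2, ih4⟩ := ih (fun i hi => hsq i (mem_insert_of_mem hi))
      (fun i hi => hneg i (mem_insert_of_mem hi))
      (fun i hi j hj => hfix i (mem_insert_of_mem hi) j (mem_insert_of_mem hj))
    have hS : ∀ ω, ∑ i ∈ s, Y i (σ a ω) = ∑ i ∈ s, Y i ω := fun ω =>
      Finset.sum_congr rfl fun j hj => hfix a (mem_insert_self a s) j (mem_insert_of_mem hj)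
        (fun h => ha (h ▸ hj)) ω
    have hn := hneg a (mem_insert_self a s)
    have hq := hsq a (mem_insert_self a s)
    have z1 := sum_odd_zero (σ a) (fun ω => Y a ω * ∑ i ∈ s, Y i ω)
      (fun ω => by simp only [hS, hn]; ring)
    have z3 := sum_odd_zero (σ a) (fun ω => Y a ω * (∑ i ∈ s, Y i ω) ^ 3)
      (fun ω => by simp only [hS, hn]; ring)
    have c1 : ∑ ω : Ω, (1:ℝ) = Fintype.card Ω := by simp
    have e2 : ∑ ω, (∑ i ∈ insert a s, Y i ω) ^ 2
        = ∑ ω : Ω, (1:ℝ) + 2 * ∑ ω, (Y a ω * ∑ i ∈ s, Y i ω) + ∑ ω, (∑ i ∈ s, Y i ω) ^ 2 := by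
      rw [Finset.mul_sum, ← Finset.sum_add_distrib, ← Finset.sum_add_distrib]
      refine Finset.sum_congr rfl fun ω _ => ?_
      rw [Finset.sum_insert ha]
      linear_combination hq ω
    have e4 : ∑ ω, (∑ i ∈ insert a s, Y i ω) ^ 4
        = ∑ ω : Ω, (1:ℝ) + 4 * ∑ ω, (Y a ω * ∑ i ∈ s, Y i ω)
          + 6 * ∑ ω, (∑ i ∈ s, Y i ω) ^ 2
          + 4 * ∑ ω, (Y a ω * (∑ i ∈ s, Y i ω) ^ 3) + ∑ ω, (∑ i ∈ s, Y i ω) ^ 4 := by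
      rw [Finset.mul_sum, Finset.mul_sum, Finset.mul_sum, ← Finset.sum_add_distrib,
        ← Finset.sum_add_distrib, ← Finset.sum_add_distrib, ← Finset.sum_add_distrib]
      refine Finset.sum_congr rfl fun ω _ => ?_
      rw [Finset.sum_insert ha]
      linear_combination (Y a ω ^ 2 + 1 + 4 * Y a ω * (∑ i ∈ s, Y i ω)
        + 6 * (∑ i ∈ s, Y i ω) ^ 2) * hq ω
    rw [e2, e4, z1, z3, c1, ih2, Finset.card_insert_of_notMem ha]
    push_cast
    have hc : (0:ℝ) ≤ Fintype.card Ω := by positivity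
    constructor
    · ring
    · nlinarith

lemma fact_le (n : ℕ) : (n + 2).factorial ≤ 3 * numDerangements (n + 2) := by
  induction n using Nat.strong_induction_on with
  | _ n ih =>
    match n with
    | 0 => decide
    | 1 => decide
    | k + 2 =>
      have h1 := ih k (by omega)
      have h2 := ih (k + 1) (by omega)
      rw [numDerangements_add_two]
      have e : (k + 2 + 2).factorial = (k + 2 + 1) * ((k+2).factorial + (k+1+2).factorial) := by
        rw [Nat.factorial_succ (k+3), show k + 1 + 2 = (k+2)+1 by rfl, Nat.factorial_succ (k+2)]
        ring
      rw [e, show k + 2 + 1 = k + 1 + 2 by rfl]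
      nlinarith

/-- sign of the comparison at position `i` -/
noncomputable def sgnY {n : ℕ} (i : Fin n) (π : Equiv.Perm (Fin n)) : ℝ :=
  if ∃ h : (i : ℕ) + 1 < n, π ⟨(i : ℕ) + 1, h⟩ < π i then 1 else -1

/-- swapping neighbouring positions -/
def swapP {n : ℕ} (i : Fin n) : Equiv.Perm (Equiv.Perm (Fin n)) :=
  if h : (i : ℕ) + 1 < n then Equiv.mulRight (Equiv.swap i ⟨(i : ℕ) + 1, h⟩) else 1

lemma sgnY_neg {n : ℕ} (i : Fin n) (h : (i : ℕ) + 1 < n) (π : Equiv.Perm (Fin n)) :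
    sgnY i (swapP i π) = - sgnY i π := by
  have hne : π ⟨(i : ℕ) + 1, h⟩ ≠ π i := by
    intro h'
    have := congrArg Fin.val (π.injective h')
    simp at this
  simp only [sgnY, swapP, h, dif_pos, exists_true_left, Equiv.coe_mulRight, Equiv.Perm.mul_apply,
    Equiv.swap_apply_left, Equiv.swap_apply_right]
  rcases lt_or_gt_of_ne hne with h1 | h1
  · simp [h1, not_lt.mpr h1.le]
  · simp [h1, not_lt.mpr h1.le]

lemma sgnY_fix {n : ℕ} (i j : Fin n) (h : (i : ℕ) + 1 < n) (hj : (j : ℕ) + 1 < n)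
    (hp : (i : ℕ) % 2 = (j : ℕ) % 2) (hij : j ≠ i)
    (π : Equiv.Perm (Fin n)) : sgnY j (swapP i π) = sgnY j π := by
  have hv : (j : ℕ) ≠ i := fun h => hij (Fin.ext h)
  have s1 : Equiv.swap i ⟨(i : ℕ) + 1, h⟩ j = j := by
    apply Equiv.swap_apply_of_ne_of_ne hij
    intro h'; have := congrArg Fin.val h'; simp at this; omega
  have s2 : Equiv.swap i ⟨(i : ℕ) + 1, h⟩ ⟨(j : ℕ) + 1, hj⟩ = ⟨(j : ℕ) + 1, hj⟩ := by
    apply Equiv.swap_apply_of_ne_of_ne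
    · intro h'; have := congrArg Fin.val h'; simp at this; omega
    · intro h'; have := congrArg Fin.val h'; simp at this; omega
  simp only [sgnY, swapP, h, dif_pos, Equiv.coe_mulRight, Equiv.Perm.mul_apply, s1, s2]

lemma sgnY_sq {n : ℕ} (i : Fin n) (π : Equiv.Perm (Fin n)) : sgnY i π ^ 2 = 1 := by
  unfold sgnY; split_ifs <;> norm_num

lemma parity_moment (n b : ℕ) :
    ∑ π : Equiv.Perm (Fin n),
      (∑ i ∈ Finset.univ.filter (fun i : Fin n => (i : ℕ) + 1 < n ∧ (i : ℕ) % 2 = b),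
        sgnY i π) ^ 4 ≤ 3 * (n : ℝ) ^ 2 * n.factorial := by
  have := (signs_moment (Ω := Equiv.Perm (Fin n)) sgnY swapP
    (Finset.univ.filter (fun i : Fin n => (i : ℕ) + 1 < n ∧ (i : ℕ) % 2 = b))
    (fun i _ ω => sgnY_sq i ω)
    (fun i hi ω => sgnY_neg i (by simp at hi; exact hi.1) ω)
    (fun i hi j hj hij ω => by
      simp at hi hj
      exact sgnY_fix i j hi.1 hj.1 (by omega) hij ω)).2
  refine this.trans ?_
  rw [Fintype.card_perm, Fintype.card_fin]
  have hc : (Finset.univ.filter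
      (fun i : Fin n => (i : ℕ) + 1 < n ∧ (i : ℕ) % 2 = b)).card ≤ n := by
    simpa using Finset.card_le_univ
      (Finset.univ.filter (fun i : Fin n => (i : ℕ) + 1 < n ∧ (i : ℕ) % 2 = b))
  gcongr

lemma descents_eq {n : ℕ} (π : Equiv.Perm (Fin n)) :
    (descents π : ℝ) - ((Finset.univ.filter (fun i : Fin n => (i : ℕ) + 1 < n)).card : ℝ) / 2 =
      ((∑ i ∈ Finset.univ.filter (fun i : Fin n => (i : ℕ) + 1 < n ∧ (i : ℕ) % 2 = 0), sgnY i π)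
      + ∑ i ∈ Finset.univ.filter (fun i : Fin n => (i : ℕ) + 1 < n ∧ (i : ℕ) % 2 = 1),
          sgnY i π) / 2 := by
  unfold descents
  rw [Finset.card_filter, Finset.card_filter]
  push_cast
  simp only [Finset.sum_filter]
  rw [← Finset.sum_add_distrib, Finset.sum_div, Finset.sum_div, ← Finset.sum_sub_distrib]
  refine Finset.sum_congr rfl fun i _ => ?_
  unfold sgnY
  by_cases h : (i : ℕ) + 1 < n
  · rcases Nat.mod_two_eq_zero_or_one i with h2 | h2 <;>
      by_cases h3 : π ⟨(i : ℕ) + 1, h⟩ < π i <;> simp [h, h2, h3] <;> norm_num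
  · simp [h]

lemma perm_moment (n : ℕ) :
    ∑ π : Equiv.Perm (Fin n), ((descents π : ℝ)
      - ((Finset.univ.filter (fun i : Fin n => (i : ℕ) + 1 < n)).card : ℝ) / 2) ^ 4
      ≤ 3 * (n : ℝ) ^ 2 * n.factorial := by
  have h0 := parity_moment n 0
  have h1 := parity_moment n 1
  have key : ∀ a b : ℝ, ((a + b) / 2) ^ 4 ≤ (a ^ 4 + b ^ 4) / 2 := by
    intro a b
    nlinarith [sq_nonneg (a ^ 2 - b ^ 2), sq_nonneg (a - b), sq_nonneg (a + b),
      sq_nonneg ((a - b) ^ 2), mul_nonneg (sq_nonneg (a - b)) (sq_nonneg (a + b))]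
  refine (Finset.sum_le_sum fun π _ => ?_).trans
    (b := ∑ π : Equiv.Perm (Fin n),
      ((∑ i ∈ Finset.univ.filter (fun i : Fin n => (i : ℕ) + 1 < n ∧ (i : ℕ) % 2 = 0),
          sgnY i π) ^ 4
      + (∑ i ∈ Finset.univ.filter (fun i : Fin n => (i : ℕ) + 1 < n ∧ (i : ℕ) % 2 = 1),
          sgnY i π) ^ 4) / 2) ?_
  · rw [descents_eq]
    exact key _ _
  · rw [← Finset.sum_div, Finset.sum_add_distrib]
    linarith

lemma card_der (n : ℕ) : (derangementSet n).card = numDerangements n := by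
  rw [← card_derangements_fin_eq_numDerangements, Fintype.card_subtype]
  unfold derangementSet
  congr 1
  ext
  simp only [Finset.mem_filter, Finset.mem_univ, true_and]
  exact Iff.rfl

/-- The fourth central moment of the number of descents of a uniformly random derangement
of `S_n` is `O(n²)`. -/
theorem fourth_moment_descents_derangements_le :
    ∃ C : ℝ, 0 < C ∧ ∀ n : ℕ, 2 ≤ n →
      (∑ π ∈ derangementSet n, ((descents π : ℝ) - derMean n) ^ 4) /
          (derangementSet n).card ≤ C * n ^ 2 := by
  refine ⟨144, by norm_num, fun n hn => ?_⟩
  have hf : (n.factorial : ℝ) ≤ 3 * ((derangementSet n).card : ℝ) := by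
    rw [card_der]
    obtain ⟨k, rfl⟩ := Nat.exists_eq_add_of_le' hn
    exact_mod_cast fact_le k
  have hfp : (0 : ℝ) < n.factorial := by exact_mod_cast n.factorial_pos
  have hd : (0 : ℝ) < (derangementSet n).card := by linarith
  rw [div_le_iff₀ hd]
  have hP := perm_moment n
  set c : ℝ := ((Finset.univ.filter (fun i : Fin n => (i : ℕ) + 1 < n)).card : ℝ) / 2
  have hμ : ∑ π ∈ derangementSet n, ((descents π : ℝ) - derMean n) = 0 := by
    rw [Finset.sum_sub_distrib, Finset.sum_const, nsmul_eq_mul]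
    unfold derMean
    field_simp
    ring
  set μ := derMean n
  have key : ∀ x m : ℝ, (x - m) ^ 4 ≤ 16 * x ^ 4 - 32 * m ^ 3 * (x - m) := by
    intro x m
    have h1 : (x - m) ^ 4 ≤ 8 * x ^ 4 + 8 * m ^ 4 := by
      nlinarith [sq_nonneg (x ^ 2 - m ^ 2), sq_nonneg ((x + m) ^ 2),
        mul_nonneg (sq_nonneg (x - m)) (sq_nonneg (x + m))]
    have h2 : m ^ 4 + 4 * m ^ 3 * (x - m) ≤ x ^ 4 := by
      nlinarith [mul_nonneg (sq_nonneg (x - m)) (sq_nonneg (x + m)),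
        mul_nonneg (sq_nonneg (x - m)) (sq_nonneg m)]
    linarith
  calc ∑ π ∈ derangementSet n, ((descents π : ℝ) - μ) ^ 4
      ≤ ∑ π ∈ derangementSet n, (16 * ((descents π : ℝ) - c) ^ 4
          - 32 * (μ - c) ^ 3 * ((descents π : ℝ) - μ)) := by
        refine Finset.sum_le_sum fun π _ => ?_
        have := key ((descents π : ℝ) - c) (μ - c)
        simpa using this
    _ = 16 * ∑ π ∈ derangementSet n, ((descents π : ℝ) - c) ^ 4 := by
        rw [Finset.sum_sub_distrib, ← Finset.mul_sum, ← Finset.mul_sum, hμ]; ring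
    _ ≤ 16 * ∑ π : Equiv.Perm (Fin n), ((descents π : ℝ) - c) ^ 4 := by
        gcongr
        exact Finset.subset_univ _
    _ ≤ 16 * (3 * (n : ℝ) ^ 2 * n.factorial) := by gcongr
    _ ≤ 16 * (3 * (n : ℝ) ^ 2 * (3 * ((derangementSet n).card : ℝ))) := by gcongr
    _ = _ := by ring
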